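/- Let d ≥ 1 and let c₀, c₁ : ℝ → ℝ^d be smooth 2π-periodic regular curves that can be joined by a smooth path of regular closed curves (i.e., there exists a smooth H : [0,1] × ℝ → ℝ^d, 2π-periodic in the second variable, with ∂_θ H ≠ 0 everywhere, H(0,·) = c₀ and H(1,·) = c₁). Then the geodesic distance of the L²-metric between c₀ and c₁ vanishes: for every ε > 0 there exists a smooth γ : [0,1] × ℝ → ℝ^d, 2π-periodic in the second variable, with ∂_θ γ(t,θ) ≠ 0 for all (t,θ), γ(0,·) = c₀, γ(1,·) = c₁, and L²-length ∫₀¹ ( ∫₀^{2π} |∂_t γ(t,θ)|² |∂_θ γ(t,θ)| dθ )^{1/2} dt < ε. -/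

import Mathlib

/-! The `L²`-length of a moving curve weights the squared velocity by arclength, so a motion is
cheap either when little length of curve moves or when every displacement is small compared with
the length moved. Sawtooth curves exploit both.

Call `(T, θ) ↦ c θ + T h θ`, `0 ≤ T ≤ 1`, a ribbon when `h` is transversal to all the curves
`c + T h`. The two boundary curves of a ribbon have distance zero (`Ribbon.close_boundary`). Draw
`n` teeth `T = Z θ` in it.
* Reparametrise `c` so that the teeth, apart from their bases `Z = 0`, occupy a fraction at most
  `δ` of the parameter circle. The tangential displacement is `O(1/n)`.
* Grow the teeth from height `0` (`Ribbon.grow`): at time `t` the height is about `min t Z`, so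
  only the tips move, and these are short once `δ` is small.
* Slide the flanks sideways (`Ribbon.slide`) until the complementary set, the teeth minus their
  tips `Z = 1`, is the narrow one. The displacement is `O(1/n)` and the length `O(n)`, so the
  energy is `O(1/n)`.
* By the symmetry exchanging the two boundary curves, what is left is again to fill in narrow
  teeth and to undo a reparametrisation.

All these curves are regular because their `θ`-coordinate in the ribbon is strictly increasing
(`Ribbon.close`).

Along the given homotopy `H`, the curves `H t` and `H s` with `s` near `t` are joined by two
ribbons, `H t → H t + K N → H s`, where `N` is a field transversal to `H t` and `K > 0` is small
(`eventually_close`). Having distance zero is transitive and symmetric, so connectedness of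
`[0, 1]` finishes the proof. -/

open Real MeasureTheory Set
open scoped ContDiff RealInnerProductSpace

noncomputable section

/-- `ℝ^d` with its Euclidean structure. -/
abbrev Rd (d : ℕ) : Type := EuclideanSpace ℝ (Fin d)

/-- The `L²`-length of a path `γ` of closed curves:
`∫₀¹ (∫₀^{2π} |∂_t γ|² |∂_θ γ| dθ)^{1/2} dt`. -/
def L2PathLength {d : ℕ} (γ : ℝ → ℝ → Rd d) : ℝ :=
  ∫ t in (0:ℝ)..1,
    Real.sqrt (∫ θ in (0:ℝ)..(2 * π),
      ‖deriv (fun s => γ s θ) t‖ ^ 2 * ‖deriv (γ t) θ‖)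

open Filter Topology

/-! ### Paths of curves and their length -/

/-- The `L²`-speed of a path of curves at time `t`. -/
def l2Speed {d : ℕ} (γ : ℝ → ℝ → Rd d) (t : ℝ) : ℝ :=
  Real.sqrt (∫ θ in (0:ℝ)..(2 * π), ‖deriv (fun s => γ s θ) t‖ ^ 2 * ‖deriv (γ t) θ‖)

/-- `Close ε a b`: the curves `a` and `b` are joined by a smooth path of regular closed curves
of `L²`-length less than `ε`. -/
def Close {d : ℕ} (ε : ℝ) (a b : ℝ → Rd d) : Prop :=
  ∃ γ : ℝ → ℝ → Rd d,
    ContDiff ℝ ∞ (Function.uncurry γ) ∧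
    (∀ t ∈ Set.Icc (0:ℝ) 1, ∀ θ, γ t (θ + 2 * π) = γ t θ) ∧
    (∀ t ∈ Set.Icc (0:ℝ) 1, ∀ θ, deriv (γ t) θ ≠ 0) ∧
    γ 0 = a ∧ γ 1 = b ∧ L2PathLength γ < ε

lemma hasDerivAt_fst {d : ℕ} {γ : ℝ → ℝ → Rd d} (h : ContDiff ℝ ∞ (Function.uncurry γ))
    (t θ : ℝ) : HasDerivAt (fun s => γ s θ) (fderiv ℝ (Function.uncurry γ) (t, θ) (1, 0)) t := by
  have h1 : HasFDerivAt (Function.uncurry γ) (fderiv ℝ (Function.uncurry γ) (t, θ)) (t, θ) :=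
    (h.differentiable (by simp) _).hasFDerivAt
  have h2 : HasDerivAt (fun s : ℝ => (s, θ)) ((1 : ℝ), (0 : ℝ)) t :=
    (hasDerivAt_id t).prodMk (hasDerivAt_const t θ)
  exact h1.comp_hasDerivAt t h2

lemma hasDerivAt_snd {d : ℕ} {γ : ℝ → ℝ → Rd d} (h : ContDiff ℝ ∞ (Function.uncurry γ))
    (t θ : ℝ) : HasDerivAt (γ t) (fderiv ℝ (Function.uncurry γ) (t, θ) (0, 1)) θ := by
  have h1 : HasFDerivAt (Function.uncurry γ) (fderiv ℝ (Function.uncurry γ) (t, θ)) (t, θ) :=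
    (h.differentiable (by simp) _).hasFDerivAt
  have h2 : HasDerivAt (fun s : ℝ => (t, s)) ((0 : ℝ), (1 : ℝ)) θ :=
    (hasDerivAt_const θ t).prodMk (hasDerivAt_id θ)
  exact h1.comp_hasDerivAt θ h2

lemma continuous_density {d : ℕ} {γ : ℝ → ℝ → Rd d} (h : ContDiff ℝ ∞ (Function.uncurry γ)) :
    Continuous (fun p : ℝ × ℝ =>
      ‖deriv (fun s => γ s p.2) p.1‖ ^ 2 * ‖deriv (γ p.1) p.2‖) := by
  have hc : Continuous (fderiv ℝ (Function.uncurry γ)) := h.continuous_fderiv (by simp)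
  have : (fun p : ℝ × ℝ => ‖deriv (fun s => γ s p.2) p.1‖ ^ 2 * ‖deriv (γ p.1) p.2‖)
      = fun p : ℝ × ℝ => ‖fderiv ℝ (Function.uncurry γ) p (1, 0)‖ ^ 2 *
        ‖fderiv ℝ (Function.uncurry γ) p (0, 1)‖ := by
    funext p
    rw [(hasDerivAt_fst h p.1 p.2).deriv, (hasDerivAt_snd h p.1 p.2).deriv]
  rw [this]
  fun_prop

lemma continuous_l2Speed {d : ℕ} {γ : ℝ → ℝ → Rd d} (h : ContDiff ℝ ∞ (Function.uncurry γ)) :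
    Continuous (l2Speed γ) := by
  unfold l2Speed
  refine Real.continuous_sqrt.comp ?_
  exact intervalIntegral.continuous_parametric_intervalIntegral_of_continuous'
    (f := fun t θ => ‖deriv (fun s => γ s θ) t‖ ^ 2 * ‖deriv (γ t) θ‖)
    (continuous_density h) 0 (2 * π)

lemma l2Speed_congr {d : ℕ} {γ γ' : ℝ → ℝ → Rd d} {t : ℝ} (h : ∀ᶠ s in 𝓝 t, γ s = γ' s) :
    l2Speed γ t = l2Speed γ' t := by
  unfold l2Speed
  congr 1
  refine intervalIntegral.integral_congr fun θ _ => ?_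
  have h1 : (fun s => γ s θ) =ᶠ[𝓝 t] fun s => γ' s θ := h.mono fun s hs => by simp [hs]
  simp only [h1.deriv_eq, h.self_of_nhds]

lemma l2Speed_comp {d : ℕ} {γ : ℝ → ℝ → Rd d} (h : ContDiff ℝ ∞ (Function.uncurry γ))
    {σ : ℝ → ℝ} {σ' t : ℝ} (hσ : HasDerivAt σ σ' t) :
    l2Speed (fun t => γ (σ t)) t = |σ'| * l2Speed γ (σ t) := by
  unfold l2Speed
  have : ∀ θ, ‖deriv (fun s => γ (σ s) θ) t‖ ^ 2 * ‖deriv (γ (σ t)) θ‖ =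
      |σ'| ^ 2 * (‖deriv (fun s => γ s θ) (σ t)‖ ^ 2 * ‖deriv (γ (σ t)) θ‖) := by
    intro θ
    have h1 := (hasDerivAt_fst h (σ t) θ)
    have h2 : HasDerivAt (fun s => γ (σ s) θ) _ t := HasDerivAt.scomp t h1 hσ
    rw [h2.deriv, h1.deriv, norm_smul, Real.norm_eq_abs]
    ring
  simp only [this]
  rw [intervalIntegral.integral_const_mul, Real.sqrt_mul (by positivity),
    Real.sqrt_sq (abs_nonneg _)]

lemma close_symm {d : ℕ} {ε : ℝ} {a b : ℝ → Rd d} (h : Close ε a b) : Close ε b a := by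
  obtain ⟨γ, hs, hp, hr, h0, h1, hl⟩ := h
  have hmem : ∀ t ∈ Set.Icc (0:ℝ) 1, 1 - t ∈ Set.Icc (0:ℝ) 1 := fun t ht =>
    ⟨by linarith [ht.2], by linarith [ht.1]⟩
  refine ⟨fun t => γ (1 - t), ?_, fun t ht => hp _ (hmem t ht), fun t ht => hr _ (hmem t ht),
    by simpa using h1, by simpa using h0, ?_⟩
  · exact hs.comp (f := fun p : ℝ × ℝ => (1 - p.1, p.2)) (by fun_prop)
  · have : L2PathLength (fun t => γ (1 - t)) = ∫ t in (0:ℝ)..1, l2Speed γ (1 - t) := by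
      refine intervalIntegral.integral_congr fun t _ => ?_
      have := l2Speed_comp hs (σ := fun t => 1 - t) (σ' := -1) (t := t)
        (by simpa using (hasDerivAt_id t).const_sub 1)
      simpa [l2Speed] using this
    rw [this, intervalIntegral.integral_comp_sub_left (l2Speed γ)]
    simpa [L2PathLength, l2Speed] using hl

/-- Slowing down by `Real.smoothTransition` makes both paths stationary near the junction, so the
concatenation can be written as a sum minus the common curve, with no case distinction. -/
lemma close_trans {d : ℕ} {ε₁ ε₂ : ℝ} {a b c : ℝ → Rd d} (h₁ : Close ε₁ a b)
    (h₂ : Close ε₂ b c) : Close (ε₁ + ε₂) a c := by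
  obtain ⟨γ, hs, hp, hr, h0, h1, hl⟩ := h₁
  obtain ⟨δ, hs', hp', hr', h0', h1', hl'⟩ := h₂
  set S := Real.smoothTransition with hS
  have hSs : ContDiff ℝ ∞ S := Real.smoothTransition.contDiff
  have hSd : ∀ x, HasDerivAt S (deriv S x) x := fun x =>
    (hSs.differentiable (by simp) x).hasDerivAt
  have hSm : ∀ x, S x ∈ Set.Icc (0:ℝ) 1 := fun x =>
    ⟨Real.smoothTransition.nonneg x, Real.smoothTransition.le_one x⟩
  have hSmono : Monotone S := Real.smoothTransition.monotone
  have hSd0 : ∀ x, 0 ≤ deriv S x := fun x => hSmono.deriv_nonneg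
  have hSdc : Continuous (deriv S) := hSs.continuous_deriv (by simp)
  have key : ∀ t θ, t < 2 / 3 → γ (S (3 * t)) θ + δ (S (3 * t - 2)) θ - γ 1 θ
      = γ (S (3 * t)) θ := by
    intro t θ ht
    rw [hS, Real.smoothTransition.zero_of_nonpos (x := 3 * t - 2) (by linarith), h0', h1]
    abel
  have key' : ∀ t θ, 1 / 3 < t → γ (S (3 * t)) θ + δ (S (3 * t - 2)) θ - γ 1 θ
      = δ (S (3 * t - 2)) θ := by
    intro t θ ht
    rw [hS, Real.smoothTransition.one_of_one_le (x := 3 * t) (by linarith)]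
    abel
  set Γ : ℝ → ℝ → Rd d := fun t θ => γ (S (3 * t)) θ + δ (S (3 * t - 2)) θ - γ 1 θ with hΓ
  have hΓs : ContDiff ℝ ∞ (Function.uncurry Γ) := by
    have e1 : ContDiff ℝ ∞ (fun p : ℝ × ℝ => γ (S (3 * p.1)) p.2) :=
      hs.comp (f := fun p : ℝ × ℝ => (S (3 * p.1), p.2)) (by fun_prop)
    have e2 : ContDiff ℝ ∞ (fun p : ℝ × ℝ => δ (S (3 * p.1 - 2)) p.2) :=
      hs'.comp (f := fun p : ℝ × ℝ => (S (3 * p.1 - 2), p.2)) (by fun_prop)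
    have e3 : ContDiff ℝ ∞ (fun p : ℝ × ℝ => γ 1 p.2) :=
      hs.comp (f := fun p : ℝ × ℝ => ((1 : ℝ), p.2)) (by fun_prop)
    exact (e1.add e2).sub e3
  have hd1 : ∀ t, HasDerivAt (fun t => S (3 * t)) (deriv S (3 * t) * 3) t := fun t =>
    (hSd (3 * t)).comp t (by simpa using (hasDerivAt_id t).const_mul 3)
  have hd2 : ∀ t, HasDerivAt (fun t => S (3 * t - 2)) (deriv S (3 * t - 2) * 3) t := fun t =>
    HasDerivAt.comp (h₂ := S) (h := fun t => 3 * t - 2) t (hSd (3 * t - 2))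
      (by simpa using ((hasDerivAt_id t).const_mul 3).sub_const 2)
  refine ⟨Γ, hΓs, ?_, ?_, ?_, ?_, ?_⟩
  · intro t _ θ
    simp only [hΓ]
    rw [hp _ (hSm _), hp' _ (hSm _), hp 1 (by simp)]
  · intro t _ θ
    rcases lt_or_ge t (1 / 2) with ht | ht
    · rw [show Γ t = γ (S (3 * t)) from funext fun θ => key t θ (by linarith)]
      exact hr _ (hSm _) θ
    · rw [show Γ t = δ (S (3 * t - 2)) from funext fun θ => key' t θ (by linarith)]
      exact hr' _ (hSm _) θ
  · funext θ
    refine (key 0 θ (by norm_num)).trans ?_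
    simp [hS, h0]
  · funext θ
    refine (key' 1 θ (by norm_num)).trans ?_
    rw [hS, Real.smoothTransition.one_of_one_le (by norm_num), h1']
  · have hc := continuous_l2Speed hΓs
    have hsplit : L2PathLength Γ = (∫ t in (0:ℝ)..(1 / 2), l2Speed Γ t) +
        ∫ t in (1 / 2 : ℝ)..1, l2Speed Γ t :=
      (intervalIntegral.integral_add_adjacent_intervals
        (hc.intervalIntegrable _ _) (hc.intervalIntegrable _ _)).symm
    have i1 : ∫ t in (0:ℝ)..(1 / 2), l2Speed Γ t = L2PathLength γ := by
      have : ∫ t in (0:ℝ)..(1 / 2), l2Speed Γ t =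
          ∫ t in (0:ℝ)..(1 / 2), (l2Speed γ ∘ fun t => S (3 * t)) t * (deriv S (3 * t) * 3) := by
        refine intervalIntegral.integral_congr fun t ht => ?_
        rw [Set.uIcc_of_le (by norm_num)] at ht
        have hev : ∀ᶠ s in 𝓝 t, Γ s = γ (S (3 * s)) := by
          filter_upwards [Iio_mem_nhds (show t < 2 / 3 by linarith [ht.2])] with s hs
          exact funext fun θ => key s θ hs
        have e := l2Speed_comp hs (hd1 t)
        rw [abs_of_nonneg (mul_nonneg (hSd0 _) (by norm_num))] at e
        simp only [l2Speed_congr hev, e, Function.comp]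
        ring
      rw [this, intervalIntegral.integral_comp_mul_deriv (fun t _ => hd1 t)
        (by fun_prop) (continuous_l2Speed hs)]
      rw [hS]
      rw [Real.smoothTransition.zero_of_nonpos (by norm_num),
        Real.smoothTransition.one_of_one_le (by norm_num)]
      rfl
    have i2 : ∫ t in (1 / 2 : ℝ)..1, l2Speed Γ t = L2PathLength δ := by
      have : ∫ t in (1 / 2 : ℝ)..1, l2Speed Γ t =
          ∫ t in (1 / 2 : ℝ)..1,
            (l2Speed δ ∘ fun t => S (3 * t - 2)) t * (deriv S (3 * t - 2) * 3) := by
        refine intervalIntegral.integral_congr fun t ht => ?_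
        rw [Set.uIcc_of_le (by norm_num)] at ht
        have hev : ∀ᶠ s in 𝓝 t, Γ s = δ (S (3 * s - 2)) := by
          filter_upwards [Ioi_mem_nhds (show 1 / 3 < t by linarith [ht.1])] with s hs
          exact funext fun θ => key' s θ hs
        have e := l2Speed_comp hs' (hd2 t)
        rw [abs_of_nonneg (mul_nonneg (hSd0 _) (by norm_num))] at e
        simp only [l2Speed_congr hev, e, Function.comp]
        ring
      rw [this, intervalIntegral.integral_comp_mul_deriv (fun t _ => hd2 t)
        (by fun_prop) (continuous_l2Speed hs')]
      rw [hS]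
      rw [Real.smoothTransition.zero_of_nonpos (by norm_num),
        Real.smoothTransition.one_of_one_le (by norm_num)]
      rfl
    rw [hsplit, i1, i2]
    exact add_lt_add hl hl'

lemma length_lt_of_energy {d : ℕ} {γ : ℝ → ℝ → Rd d} (h : ContDiff ℝ ∞ (Function.uncurry γ))
    {E ε : ℝ} (hε : 0 < ε) (hE : E < ε ^ 2)
    (hγ : ∀ t ∈ Set.Icc (0:ℝ) 1,
      ∫ θ in (0:ℝ)..(2 * π), ‖deriv (fun s => γ s θ) t‖ ^ 2 * ‖deriv (γ t) θ‖ ≤ E) :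
    L2PathLength γ < ε := by
  have h1 : L2PathLength γ ≤ ∫ _t in (0:ℝ)..1, Real.sqrt E := by
    refine intervalIntegral.integral_mono_on (by norm_num)
      ((continuous_l2Speed h).intervalIntegrable _ _) (by simp) fun t ht => ?_
    exact Real.sqrt_le_sqrt (hγ t ht)
  have h2 : Real.sqrt E < ε := (Real.sqrt_lt' hε).2 hE
  simp at h1
  linarith

/-! ### Paths inside a ribbon -/

/-- A ribbon: the strip `(T, θ) ↦ c θ + T h θ`, `0 ≤ T ≤ 1`, swept out when the closed curve `c`
is displaced by `h`. The displacement is required to be transversal to all the intermediate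
curves, and `M` bounds the partial derivatives of the strip. -/
structure Ribbon {d : ℕ} (c h : ℝ → Rd d) (M : ℝ) : Prop where
  smooth_c : ContDiff ℝ ∞ c
  smooth_h : ContDiff ℝ ∞ h
  per_c : ∀ θ, c (θ + 2 * π) = c θ
  per_h : ∀ θ, h (θ + 2 * π) = h θ
  indep : ∀ T ∈ Set.Icc (0:ℝ) 1, ∀ θ, LinearIndependent ℝ ![h θ, deriv c θ + T • deriv h θ]
  bound_h : ∀ θ, ‖h θ‖ ≤ M
  bound_c : ∀ T ∈ Set.Icc (0:ℝ) 1, ∀ θ, ‖deriv c θ + T • deriv h θ‖ ≤ M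

lemma Ribbon.nonneg {d : ℕ} {c h : ℝ → Rd d} {M : ℝ} (R : Ribbon c h M) : 0 ≤ M :=
  (norm_nonneg _).trans (R.bound_h 0)

/-- The same strip, traversed from the other boundary curve. -/
lemma Ribbon.reverse {d : ℕ} {c h : ℝ → Rd d} {M : ℝ} (R : Ribbon c h M) :
    Ribbon (fun θ => c θ + h θ) (fun θ => -h θ) M := by
  have hd : ∀ T θ : ℝ, deriv (fun θ => c θ + h θ) θ + T • deriv (fun θ => -h θ) θ
      = deriv c θ + (1 - T) • deriv h θ := by
    intro T θ
    have h1 : HasDerivAt c (deriv c θ) θ := (R.smooth_c.differentiable (by simp) θ).hasDerivAt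
    have h2 : HasDerivAt h (deriv h θ) θ := (R.smooth_h.differentiable (by simp) θ).hasDerivAt
    rw [show deriv (fun θ => c θ + h θ) θ = _ from (h1.add h2).deriv,
      show deriv (fun θ => -h θ) θ = _ from h2.neg.deriv]
    module
  have hT : ∀ T ∈ Set.Icc (0:ℝ) 1, 1 - T ∈ Set.Icc (0:ℝ) 1 := fun t ht =>
    ⟨by linarith [ht.2], by linarith [ht.1]⟩
  refine ⟨R.smooth_c.add R.smooth_h, R.smooth_h.neg, fun θ => by simp [R.per_c, R.per_h],
    fun θ => by simp [R.per_h], ?_, fun θ => by simpa using R.bound_h θ, ?_⟩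
  · intro T hTm θ
    rw [hd]
    have := R.indep _ (hT T hTm) θ
    rw [LinearIndependent.pair_iff] at this ⊢
    intro s t hst
    have := this (-s) t (by rw [← hst]; module)
    exact ⟨by linarith [this.1], this.2⟩
  · intro T hTm θ
    rw [hd]
    exact R.bound_c _ (hT T hTm) θ

lemma Ribbon.hasDerivAt {d : ℕ} {c h : ℝ → Rd d} {M : ℝ} (R : Ribbon c h M)
    {φ τ : ℝ → ℝ} {φ' τ' x : ℝ} (hφ : HasDerivAt φ φ' x) (hτ : HasDerivAt τ τ' x) :
    HasDerivAt (fun x => c (φ x) + τ x • h (φ x))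
      (φ' • (deriv c (φ x) + τ x • deriv h (φ x)) + τ' • h (φ x)) x := by
  have h1 : HasDerivAt c (deriv c (φ x)) (φ x) :=
    (R.smooth_c.differentiable (by simp) _).hasDerivAt
  have h2 : HasDerivAt h (deriv h (φ x)) (φ x) :=
    (R.smooth_h.differentiable (by simp) _).hasDerivAt
  have h3 := (h1.scomp x hφ).add (hτ.smul (h2.scomp x hφ))
  refine h3.congr_deriv ?_
  simp only [Function.comp]
  module

/-- A path of curves drawn in a ribbon, with coordinates `(T, Φ)`. Since `Φ` increases along each
curve, transversality makes the curve regular however steep `T` is. -/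
lemma Ribbon.close {d : ℕ} {c h : ℝ → Rd d} {M : ℝ} (R : Ribbon c h M)
    {Φ T Φt Φx Tt Tx : ℝ → ℝ → ℝ}
    (hΦ : ContDiff ℝ ∞ (Function.uncurry Φ)) (hT : ContDiff ℝ ∞ (Function.uncurry T))
    (hΦt : ∀ t θ, HasDerivAt (fun s => Φ s θ) (Φt t θ) t)
    (hΦx : ∀ t θ, HasDerivAt (Φ t) (Φx t θ) θ)
    (hTt : ∀ t θ, HasDerivAt (fun s => T s θ) (Tt t θ) t)
    (hTx : ∀ t θ, HasDerivAt (T t) (Tx t θ) θ)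
    (hΦper : ∀ t θ, Φ t (θ + 2 * π) = Φ t θ + 2 * π) (hTper : ∀ t θ, T t (θ + 2 * π) = T t θ)
    (hTm : ∀ t ∈ Set.Icc (0:ℝ) 1, ∀ θ, T t θ ∈ Set.Icc (0:ℝ) 1)
    (hΦpos : ∀ t ∈ Set.Icc (0:ℝ) 1, ∀ θ, 0 < Φx t θ)
    {E ε : ℝ} (hε : 0 < ε) (hE : E < ε ^ 2) (e : ℝ → ℝ → ℝ)
    (hec : ∀ t, Continuous (e t))
    (he : ∀ t ∈ Set.Icc (0:ℝ) 1, ∀ θ,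
      (M * |Φt t θ| + M * |Tt t θ|) ^ 2 * (M * Φx t θ + M * |Tx t θ|) ≤ e t θ)
    (heE : ∀ t ∈ Set.Icc (0:ℝ) 1, ∫ θ in (0:ℝ)..(2 * π), e t θ ≤ E) :
    Close ε (fun θ => c (Φ 0 θ) + T 0 θ • h (Φ 0 θ)) (fun θ => c (Φ 1 θ) + T 1 θ • h (Φ 1 θ)) := by
  set γ : ℝ → ℝ → Rd d := fun t θ => c (Φ t θ) + T t θ • h (Φ t θ) with hγ
  have hs : ContDiff ℝ ∞ (Function.uncurry γ) :=
    (R.smooth_c.comp hΦ).add (hT.smul (R.smooth_h.comp hΦ))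
  have dt : ∀ t θ, HasDerivAt (fun s => γ s θ) _ t := fun t θ =>
    R.hasDerivAt (hΦt t θ) (hTt t θ)
  have dx : ∀ t θ, HasDerivAt (γ t) _ θ := fun t θ => R.hasDerivAt (hΦx t θ) (hTx t θ)
  have bd : ∀ t ∈ Set.Icc (0:ℝ) 1, ∀ θ a b : ℝ,
      ‖a • (deriv c (Φ t θ) + T t θ • deriv h (Φ t θ)) + b • h (Φ t θ)‖ ≤ M * |a| + M * |b| := by
    intro t ht θ a b
    refine (norm_add_le _ _).trans ?_
    rw [norm_smul, norm_smul, Real.norm_eq_abs, Real.norm_eq_abs, mul_comm M, mul_comm M]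
    gcongr
    · exact R.bound_c _ (hTm t ht θ) _
    · exact R.bound_h _
  refine ⟨γ, hs, ?_, ?_, rfl, rfl, length_lt_of_energy hs hε hE fun t ht => ?_⟩
  · intro t _ θ
    simp only [hγ, hΦper, hTper, R.per_c, R.per_h]
  · intro t ht θ h0
    rw [(dx t θ).deriv] at h0
    have hi := R.indep _ (hTm t ht θ) (Φ t θ)
    rw [LinearIndependent.pair_iff] at hi
    have := (hi _ _ (by rw [add_comm]; exact h0)).2
    exact (hΦpos t ht θ).ne' this
  · refine le_trans ?_ (heE t ht)
    refine intervalIntegral.integral_mono_on (by positivity) ?_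
      ((hec t).intervalIntegrable _ _) fun θ _ => ?_
    · have := (continuous_density hs).comp (f := fun θ : ℝ => (t, θ)) (by fun_prop)
      exact this.intervalIntegrable _ _
    · refine le_trans ?_ (he t ht θ)
      rw [(dt t θ).deriv, (dx t θ).deriv]
      have b1 := bd t ht θ (Φt t θ) (Tt t θ)
      have b2 := bd t ht θ (Φx t θ) (Tx t θ)
      rw [abs_of_pos (hΦpos t ht θ)] at b2
      gcongr

/-- Small tangential displacements `Φa → Φb` at fixed height `Z`. -/
lemma Ribbon.slide {d : ℕ} {c h : ℝ → Rd d} {M : ℝ} (R : Ribbon c h M)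
    {Z Φa Φb : ℝ → ℝ} (hZ : ContDiff ℝ ∞ Z) (hΦa : ContDiff ℝ ∞ Φa) (hΦb : ContDiff ℝ ∞ Φb)
    (hZper : ∀ θ, Z (θ + 2 * π) = Z θ) (hZm : ∀ θ, Z θ ∈ Set.Icc (0:ℝ) 1)
    (ha : ∀ θ, Φa (θ + 2 * π) = Φa θ + 2 * π) (hb : ∀ θ, Φb (θ + 2 * π) = Φb θ + 2 * π)
    (ha' : ∀ θ, 0 < deriv Φa θ) (hb' : ∀ θ, 0 < deriv Φb θ)
    {B κ L ε : ℝ} (haB : ∀ θ, deriv Φa θ ≤ B) (hbB : ∀ θ, deriv Φb θ ≤ B)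
    (hκ : ∀ θ, |Φb θ - Φa θ| ≤ κ) (hL : ∀ θ, |deriv Z θ| ≤ L) (hε : 0 < ε)
    (hE : (M * κ) ^ 2 * (M * B + M * L) * (2 * π) < ε ^ 2) :
    Close ε (fun θ => c (Φa θ) + Z θ • h (Φa θ)) (fun θ => c (Φb θ) + Z θ • h (Φb θ)) := by
  have dd : ∀ {f : ℝ → ℝ}, ContDiff ℝ ∞ f → ∀ θ, HasDerivAt f (deriv f θ) θ := fun hf θ =>
    (hf.differentiable (by simp) θ).hasDerivAt
  have hM := R.nonneg
  have := R.close (Φ := fun t θ => Φa θ + t * (Φb θ - Φa θ)) (T := fun _ θ => Z θ)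
    (Φt := fun _ θ => Φb θ - Φa θ)
    (Φx := fun t θ => deriv Φa θ + t * (deriv Φb θ - deriv Φa θ)) (Tt := fun _ _ => 0)
    (Tx := fun _ θ => deriv Z θ)
    (by
      have h1 : ContDiff ℝ ∞ fun p : ℝ × ℝ => Φa p.2 := hΦa.comp contDiff_snd
      have h2 : ContDiff ℝ ∞ fun p : ℝ × ℝ => Φb p.2 := hΦb.comp contDiff_snd
      exact h1.add (contDiff_fst.mul (h2.sub h1)))
    (hZ.comp contDiff_snd)
    (fun t θ => by simpa using ((hasDerivAt_id t).mul_const (Φb θ - Φa θ)).const_add (Φa θ))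
    (fun t θ => (dd hΦa θ).add (((dd hΦb θ).sub (dd hΦa θ)).const_mul t))
    (fun t θ => hasDerivAt_const t _)
    (fun t θ => dd hZ θ)
    (fun t θ => by simp only [ha, hb]; ring)
    (fun t θ => hZper θ) (fun t _ θ => hZm θ)
    (fun t ht θ => by
      have e : deriv Φa θ + t * (deriv Φb θ - deriv Φa θ)
        = (1 - t) * deriv Φa θ + t * deriv Φb θ := by ring
      rw [e]
      rcases eq_or_lt_of_le ht.1 with h0 | h0
      · rw [← h0]; simpa using ha' θ
      · have := mul_pos h0 (hb' θ)
        have := mul_nonneg (sub_nonneg.2 ht.2) (ha' θ).le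
        linarith)
    (E := (M * κ) ^ 2 * (M * B + M * L) * (2 * π)) hε hE
    (fun _ _ => (M * κ) ^ 2 * (M * B + M * L)) (fun _ => continuous_const)
    (fun t ht θ => by
      have e : deriv Φa θ + t * (deriv Φb θ - deriv Φa θ) ≤ B := by
        have h1 := mul_le_mul_of_nonneg_left (hbB θ) ht.1
        have h2 := mul_le_mul_of_nonneg_left (haB θ) (sub_nonneg.2 ht.2)
        linarith
      have e0 : 0 ≤ deriv Φa θ + t * (deriv Φb θ - deriv Φa θ) := by
        have h1 := mul_nonneg ht.1 (hb' θ).le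
        have h2 := mul_nonneg (sub_nonneg.2 ht.2) (ha' θ).le
        linarith
      have k := hκ θ
      have l := hL θ
      simp only [abs_zero, mul_zero, add_zero]
      gcongr)
    (fun t ht => by
      rw [intervalIntegral.integral_const, smul_eq_mul]
      apply le_of_eq; ring)
  simpa using this

/-- An antiderivative of the smooth step function. -/
def stepPrim (x : ℝ) : ℝ := ∫ y in (0:ℝ)..x, Real.smoothTransition y

lemma hasDerivAt_stepPrim (x : ℝ) : HasDerivAt stepPrim (Real.smoothTransition x) x :=
  intervalIntegral.integral_hasDerivAt_right
    (Real.smoothTransition.continuous.intervalIntegrable _ _)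
    (Real.smoothTransition.continuous.stronglyMeasurableAtFilter _ _)
    Real.smoothTransition.continuous.continuousAt

lemma contDiff_stepPrim : ContDiff ℝ ∞ stepPrim := by
  rw [contDiff_infty_iff_deriv]
  refine ⟨fun x => (hasDerivAt_stepPrim x).differentiableAt, ?_⟩
  rw [show deriv stepPrim = Real.smoothTransition from
    funext fun x => (hasDerivAt_stepPrim x).deriv]
  exact Real.smoothTransition.contDiff

lemma stepPrim_sub_mem {x y : ℝ} (hxy : x ≤ y) :
    stepPrim y - stepPrim x ∈ Set.Icc 0 (y - x) := by
  have hi : ∀ a b : ℝ, IntervalIntegrable Real.smoothTransition volume a b := fun a b =>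
    Real.smoothTransition.continuous.intervalIntegrable _ _
  have e : stepPrim y - stepPrim x = ∫ z in x..y, Real.smoothTransition z :=
    intervalIntegral.integral_interval_sub_left (hi _ _) (hi _ _)
  rw [e]
  refine ⟨intervalIntegral.integral_nonneg hxy fun z _ => Real.smoothTransition.nonneg z, ?_⟩
  have := intervalIntegral.integral_mono_on hxy (hi x y) (intervalIntegrable_const (c := (1:ℝ)))
    fun z _ => Real.smoothTransition.le_one z
  simpa using this

lemma stepPrim_of_nonpos {x : ℝ} (hx : x ≤ 0) : stepPrim x = 0 := by
  have : ∫ y in (0:ℝ)..x, Real.smoothTransition y = ∫ y in (0:ℝ)..x, (0:ℝ) := by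
    refine intervalIntegral.integral_congr fun y hy => ?_
    rw [Set.uIcc_of_ge hx] at hy
    exact Real.smoothTransition.zero_of_nonpos hy.2
  simpa [stepPrim] using this

lemma stepPrim_sub_of_one_le {x y : ℝ} (hx : 1 ≤ x) (hxy : x ≤ y) :
    stepPrim y - stepPrim x = y - x := by
  have hi : ∀ a b : ℝ, IntervalIntegrable Real.smoothTransition volume a b := fun a b =>
    Real.smoothTransition.continuous.intervalIntegrable _ _
  have e : stepPrim y - stepPrim x = ∫ z in x..y, Real.smoothTransition z :=
    intervalIntegral.integral_interval_sub_left (hi _ _) (hi _ _)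
  have : ∫ z in x..y, Real.smoothTransition z = ∫ z in x..y, (1:ℝ) := by
    refine intervalIntegral.integral_congr fun z hz => ?_
    rw [Set.uIcc_of_le hxy] at hz
    exact Real.smoothTransition.one_of_one_le (hx.trans hz.1)
  rw [e, this]; simp

/-- The width of the zone where `s (1 - s) ≠ 0` is at most `η`. -/
lemma integral_step_le {η : ℝ} (hη : 0 < η) (t : ℝ) :
    ∫ z in (0:ℝ)..1, Real.smoothTransition ((t - z) / η) *
      (1 - Real.smoothTransition ((t - z) / η)) ≤ η := by
  rw [intervalIntegral.integral_of_le zero_le_one]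
  have hm : MeasurableSet (Set.Icc (t - η) t) := measurableSet_Icc
  have hle : ∀ z : ℝ, Real.smoothTransition ((t - z) / η) *
      (1 - Real.smoothTransition ((t - z) / η)) ≤ (Set.Icc (t - η) t).indicator 1 z := by
    intro z
    set s := Real.smoothTransition ((t - z) / η) with hs
    have h0 : 0 ≤ s := Real.smoothTransition.nonneg _
    have h1 : s ≤ 1 := Real.smoothTransition.le_one _
    by_cases hz : z ∈ Set.Icc (t - η) t
    · rw [Set.indicator_of_mem hz]
      simp only [Pi.one_apply]
      nlinarith
    · rw [Set.indicator_of_notMem hz]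
      rcases lt_or_ge t z with h | h
      · have : s = 0 := Real.smoothTransition.zero_of_nonpos
          (div_nonpos_of_nonpos_of_nonneg (by linarith) hη.le)
        simp [this]
      · have h2 : z < t - η := by
          by_contra h3
          exact hz ⟨by linarith, h⟩
        have : s = 1 := Real.smoothTransition.one_of_one_le
          ((one_le_div hη).2 (by linarith))
        simp [this]
  have hcont : Continuous fun z : ℝ => Real.smoothTransition ((t - z) / η) *
      (1 - Real.smoothTransition ((t - z) / η)) := by
    have : Continuous fun z : ℝ => Real.smoothTransition ((t - z) / η) :=
      Real.smoothTransition.continuous.comp (by fun_prop)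
    fun_prop
  calc _ ≤ ∫ z in Set.Ioc (0:ℝ) 1, (Set.Icc (t - η) t).indicator (1 : ℝ → ℝ) z := by
        refine setIntegral_mono_on (hcont.integrableOn_Ioc) ?_ measurableSet_Ioc fun z _ => hle z
        exact (integrable_indicator_iff hm).2 (by
          refine (integrableOn_const (C := (1:ℝ)) ?_)
          rw [Measure.restrict_apply hm]
          exact ((measure_mono Set.inter_subset_right).trans_lt (by simp)).ne)
    _ = (volume.restrict (Set.Ioc (0:ℝ) 1)).real (Set.Icc (t - η) t) := integral_indicator_one hm
    _ ≤ volume.real (Set.Icc (t - η) t) := by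
        refine ENNReal.toReal_mono (by simp) (Measure.restrict_apply_le _ _)
    _ = η := by rw [Real.volume_real_Icc_of_le (by linarith)]; ring

/-- Growing the teeth of `Z` from height `0`: at time `t` the curve has height about `min t Z`.
Only the tips move, and they carry all parameters still below their final height; these occupy
little length when `Φ` compresses the set `Z ≠ 0` by the factor `δ`. The minimum is smoothed at
scale `η`. -/
lemma Ribbon.grow {d : ℕ} {c h : ℝ → Rd d} {M : ℝ} (R : Ribbon c h M)
    {Z Φ : ℝ → ℝ} (hZ : ContDiff ℝ ∞ Z) (hΦ : ContDiff ℝ ∞ Φ)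
    (hZper : ∀ θ, Z (θ + 2 * π) = Z θ) (hZm : ∀ θ, Z θ ∈ Set.Icc (0:ℝ) 1)
    (hΦper : ∀ θ, Φ (θ + 2 * π) = Φ θ + 2 * π)
    (hΦ' : ∀ θ, 0 < deriv Φ θ) {δ η V ε : ℝ} (hδ : ∀ θ, Z θ ≠ 0 → deriv Φ θ = δ) (hδ0 : 0 ≤ δ)
    (hη : 0 < η) (hη1 : η ≤ 1) (hV0 : 0 ≤ V)
    (hV : ∀ g : ℝ → ℝ, Continuous g → (∀ x, 0 ≤ g x) →
      ∫ θ in (0:ℝ)..(2 * π), g (Z θ) * |deriv Z θ| ≤ V * ∫ z in (0:ℝ)..1, g z)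
    (hε : 0 < ε) (hE : (2 * M) ^ 2 * (M * δ * (2 * π) + M * (V * η)) < ε ^ 2) :
    Close ε (fun θ => c (Φ θ)) (fun θ => c (Φ θ) + Z θ • h (Φ θ)) := by
  have dd : ∀ {f : ℝ → ℝ}, ContDiff ℝ ∞ f → ∀ θ, HasDerivAt f (deriv f θ) θ := fun hf θ =>
    (hf.differentiable (by simp) θ).hasDerivAt
  have hM := R.nonneg
  have hSc := Real.smoothTransition.continuous
  have hZc := hZ.continuous
  have hZ'c : Continuous (deriv Z) := hZ.continuous_deriv (by simp)
  set S := Real.smoothTransition with hS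
  set u : ℝ → ℝ := fun t => (1 + η) * t / η with hu
  set v : ℝ → ℝ → ℝ := fun t z => ((1 + η) * t - z) / η with hv
  have huv : ∀ t z, 0 ≤ z → v t z ≤ u t := by
    intro t z hz
    simp only [hu, hv]
    gcongr
    linarith
  have huv' : ∀ t z, η * (u t - v t z) = z := by
    intro t z
    simp only [hu, hv]
    field_simp
    ring
  set T : ℝ → ℝ → ℝ := fun t θ => η * (stepPrim (u t) - stepPrim (v t (Z θ))) with hT
  have hgc : ∀ t, Continuous fun z => S (v t z) * (1 - S (v t z)) := by
    intro t
    have : Continuous fun z => S (v t z) := hSc.comp (by simp only [hv]; fun_prop)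
    fun_prop
  have T0 : ∀ θ, T 0 θ = 0 := by
    intro θ
    have h1 : u 0 ≤ 0 := by simp [hu]
    have h2 := (huv 0 (Z θ) (hZm θ).1).trans h1
    simp only [hT, stepPrim_of_nonpos h1, stepPrim_of_nonpos h2, sub_zero, mul_zero]
  have T1 : ∀ θ, T 1 θ = Z θ := by
    intro θ
    have h2 : 1 ≤ v 1 (Z θ) := by
      simp only [hv]
      rw [one_le_div hη]
      linarith [(hZm θ).2]
    simp only [hT]
    rw [stepPrim_sub_of_one_le h2 (huv 1 _ (hZm θ).1), huv']
  have key := R.close (Φ := fun _ θ => Φ θ) (T := T) (Φt := fun _ _ => 0)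
    (Φx := fun _ θ => deriv Φ θ) (Tt := fun t θ => (1 + η) * (S (u t) - S (v t (Z θ))))
    (Tx := fun t θ => S (v t (Z θ)) * deriv Z θ)
    (hΦ.comp contDiff_snd)
    (by
      have h1 : ContDiff ℝ ∞ fun p : ℝ × ℝ => Z p.2 := hZ.comp contDiff_snd
      have h2 : ContDiff ℝ ∞ fun p : ℝ × ℝ => stepPrim (u p.1) :=
        contDiff_stepPrim.comp ((contDiff_const.mul contDiff_fst).div_const _)
      have h3 : ContDiff ℝ ∞ fun p : ℝ × ℝ => stepPrim (v p.1 (Z p.2)) :=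
        contDiff_stepPrim.comp (((contDiff_const.mul contDiff_fst).sub h1).div_const _)
      exact contDiff_const.mul (h2.sub h3))
    (fun t θ => hasDerivAt_const t _)
    (fun t θ => dd hΦ θ)
    (fun t θ => by
      have h1 : HasDerivAt u ((1 + η) / η) t := by
        simpa using ((hasDerivAt_id t).const_mul (1 + η)).div_const η
      have h2 : HasDerivAt (fun t => v t (Z θ)) ((1 + η) / η) t := by
        simpa using (((hasDerivAt_id t).const_mul (1 + η)).sub_const (Z θ)).div_const η
      have h3 := (((hasDerivAt_stepPrim (u t)).comp t h1).sub
        (HasDerivAt.comp (h₂ := stepPrim) t (hasDerivAt_stepPrim (v t (Z θ))) h2)).const_mul η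
      refine h3.congr_deriv ?_
      field_simp
      ring)
    (fun t θ => by
      have h2 : HasDerivAt (fun θ => v t (Z θ)) (-deriv Z θ / η) θ := by
        simpa using ((dd hZ θ).const_sub ((1 + η) * t)).div_const η
      have h3 := ((HasDerivAt.comp (h₂ := stepPrim) θ
        (hasDerivAt_stepPrim (v t (Z θ))) h2).const_sub (stepPrim (u t))).const_mul η
      refine h3.congr_deriv ?_
      field_simp
      simp [hS, mul_comm])
    (fun t θ => hΦper θ) (fun t θ => by simp only [hT, hZper])
    (fun t _ θ => by
      have h1 := stepPrim_sub_mem (huv t (Z θ) (hZm θ).1)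
      refine ⟨mul_nonneg hη.le h1.1, ?_⟩
      calc T t θ ≤ η * (u t - v t (Z θ)) := mul_le_mul_of_nonneg_left h1.2 hη.le
        _ = Z θ := huv' t _
        _ ≤ 1 := (hZm θ).2)
    (fun t _ θ => hΦ' θ)
    (E := (2 * M) ^ 2 * (M * δ * (2 * π) + M * (V * η))) hε hE
    (fun t θ => (2 * M) ^ 2 *
      (M * δ + M * ((S (v t (Z θ)) * (1 - S (v t (Z θ)))) * |deriv Z θ|)))
    (fun t => by
      have := (hgc t).comp hZc
      simp only [Function.comp_def] at this
      fun_prop)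
    (fun t _ θ => by
      have s0 : 0 ≤ S (v t (Z θ)) := Real.smoothTransition.nonneg _
      have s1 : S (u t) ≤ 1 := Real.smoothTransition.le_one _
      have s2 : S (v t (Z θ)) ≤ S (u t) :=
        Real.smoothTransition.monotone (huv t _ (hZm θ).1)
      have hr : 0 ≤ M * δ + M * ((S (v t (Z θ)) * (1 - S (v t (Z θ)))) * |deriv Z θ|) := by
        have := mul_nonneg s0 (by linarith : 0 ≤ 1 - S (v t (Z θ)))
        positivity
      by_cases hz : Z θ = 0
      · have : v t (Z θ) = u t := by simp [hz, hu, hv]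
        simp only [this, sub_self, mul_zero, abs_zero, add_zero]
        rw [this] at hr
        simp only [ne_eq, OfNat.ofNat_ne_zero, not_false_eq_true, zero_pow, zero_mul]
        positivity
      · rw [hδ θ hz]
        rw [abs_mul, abs_mul, abs_of_nonneg s0, abs_of_nonneg (sub_nonneg.2 s2),
          abs_of_nonneg (by linarith : 0 ≤ 1 + η)]
        set s := S (v t (Z θ))
        set q := S (u t) - s with hq
        set z := |deriv Z θ|
        have hz0 : 0 ≤ z := abs_nonneg _
        have q0 : 0 ≤ q := sub_nonneg.2 s2
        have q1 : q ≤ 1 - s := by simp only [hq]; linarith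
        have q2 : q ^ 2 ≤ 1 - s := by nlinarith
        have q3 : q ^ 2 ≤ 1 := by nlinarith
        have a1 : (M * |(0:ℝ)| + M * ((1 + η) * q)) ^ 2 ≤ (2 * M) ^ 2 * q ^ 2 := by
          rw [abs_zero, mul_zero, zero_add, ← mul_pow]
          refine pow_le_pow_left₀ (by positivity) ?_ 2
          have : (1 + η) * (M * q) ≤ 2 * (M * q) :=
            mul_le_mul_of_nonneg_right (by linarith) (by positivity)
          linarith
        calc _ ≤ (2 * M) ^ 2 * q ^ 2 * (M * δ + M * (s * z)) :=
              mul_le_mul_of_nonneg_right a1 (by positivity)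
          _ = (2 * M) ^ 2 * (M * δ * q ^ 2 + M * (s * z) * q ^ 2) := by ring
          _ ≤ (2 * M) ^ 2 * (M * δ * 1 + M * (s * z) * (1 - s)) := by gcongr
          _ = _ := by ring)
    (fun t _ => by
      have hc := (hgc t).comp hZc
      simp only [Function.comp_def] at hc
      rw [intervalIntegral.integral_const_mul, intervalIntegral.integral_add (by simp)
        ((by fun_prop : Continuous _).intervalIntegrable _ _),
        intervalIntegral.integral_const, intervalIntegral.integral_const_mul]
      have h1 := hV _ (hgc t) (fun x => mul_nonneg (Real.smoothTransition.nonneg _)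
        (by linarith [Real.smoothTransition.le_one (v t x)]))
      have h2 := integral_step_le hη ((1 + η) * t)
      have h3 := h1.trans (mul_le_mul_of_nonneg_left h2 hV0)
      refine mul_le_mul_of_nonneg_left ?_ (by positivity)
      refine add_le_add (le_of_eq ?_) (mul_le_mul_of_nonneg_left h3 hM)
      rw [smul_eq_mul]; ring)
  simpa [T0, T1] using key

/-! ### Teeth and compressions of the parameter -/

lemma exists_bound_of_periodic {E : Type*} [NormedAddCommGroup E] {f : ℝ → E}
    (hf : Continuous f) (hp : ∀ x, f (x + 2 * π) = f x) : ∃ M, ∀ x, ‖f x‖ ≤ M := by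
  obtain ⟨M, hM⟩ := (isCompact_Icc (a := (0:ℝ)) (b := 2 * π)).exists_bound_of_continuousOn
    hf.continuousOn
  refine ⟨M, fun x => ?_⟩
  obtain ⟨y, hy, hxy⟩ := Function.Periodic.exists_mem_Ico₀ (f := f) hp (by positivity) x
  rw [hxy]
  exact hM y ⟨hy.1, hy.2.le⟩

lemma deriv_periodic {E : Type*} [NormedAddCommGroup E] [NormedSpace ℝ E] {f : ℝ → E}
    (hp : ∀ x, f (x + 2 * π) = f x) (x : ℝ) : deriv f (x + 2 * π) = deriv f x := by
  rw [← deriv_comp_add_const]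
  simp only [hp]

/-- Circle diffeomorphisms that compress the set `p = 0` by an arbitrarily small factor `δ`,
with bounds on displacement and derivative that do not depend on `δ`. -/
lemma exists_compression {p : ℝ → ℝ} (hp : ContDiff ℝ ∞ p) (hper : ∀ x, p (x + 2 * π) = p x)
    (hp0 : ∀ x, 0 ≤ p x) (hpos : ∃ x ∈ Set.Ioo 0 (2 * π), 0 < p x) :
    ∃ B κ : ℝ, 0 ≤ B ∧ 0 ≤ κ ∧ ∀ δ ∈ Set.Ioc (0:ℝ) 1, ∃ φ : ℝ → ℝ, ContDiff ℝ ∞ φ ∧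
      (∀ x, φ (x + 2 * π) = φ x + 2 * π) ∧ (∀ x, 0 < deriv φ x) ∧ (∀ x, deriv φ x ≤ B) ∧
      (∀ x, |φ x - x| ≤ κ) ∧ ∀ x, p x = 0 → deriv φ x = δ := by
  have hi : ∀ a b, IntervalIntegrable p volume a b := hp.continuous.intervalIntegrable
  set I := ∫ x in (0:ℝ)..(2 * π), p x with hI
  have hIpos : 0 < I := by
    obtain ⟨x, hx, hx'⟩ := hpos
    exact intervalIntegral.integral_pos (by positivity) hp.continuous.continuousOn
      (fun y _ => hp0 y) ⟨x, ⟨hx.1.le, hx.2.le⟩, hx'⟩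
  set q : ℝ → ℝ := fun x => 2 * π / I * ∫ y in (0:ℝ)..x, p y with hq
  have hqd : ∀ x, HasDerivAt q (2 * π / I * p x) x := fun x =>
    (intervalIntegral.integral_hasDerivAt_right (hi _ _)
      (hp.continuous.stronglyMeasurableAtFilter _ _) hp.continuous.continuousAt).const_mul _
  have hqs : ContDiff ℝ ∞ q := by
    rw [contDiff_infty_iff_deriv]
    refine ⟨fun x => (hqd x).differentiableAt, ?_⟩
    rw [show deriv q = fun x => 2 * π / I * p x from funext fun x => (hqd x).deriv]
    exact contDiff_const.mul hp
  have hqper : ∀ x, q (x + 2 * π) = q x + 2 * π := by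
    intro x
    have := Function.Periodic.intervalIntegral_add_eq_add (f := p) hper 0 x hi
    rw [zero_add] at this
    simp only [hq]
    rw [this, mul_add]
    congr 1
    rw [← hI]
    field_simp
  obtain ⟨κ, hκ⟩ := exists_bound_of_periodic (f := fun x => q x - x)
    (hqs.continuous.sub continuous_id) (fun x => by rw [hqper]; ring)
  obtain ⟨B, hB⟩ := exists_bound_of_periodic (f := fun x => 2 * π / I * p x)
    (continuous_const.mul hp.continuous) (fun x => by rw [hper])
  have hκ0 : 0 ≤ κ := (norm_nonneg _).trans (hκ 0)
  have hB0 : 0 ≤ B := (norm_nonneg _).trans (hB 0)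
  refine ⟨1 + B, κ, by positivity, hκ0, fun δ hδ => ?_⟩
  have hd : ∀ x, HasDerivAt (fun x => δ * x + (1 - δ) * q x)
      (δ + (1 - δ) * (2 * π / I * p x)) x := fun x => by
    have h1 : HasDerivAt (fun x => δ * x) δ x := by simpa using (hasDerivAt_id x).const_mul δ
    exact h1.add ((hqd x).const_mul (1 - δ))
  have h1δ : 0 ≤ 1 - δ := sub_nonneg.2 hδ.2
  have hpp : ∀ x, 0 ≤ 2 * π / I * p x := fun x => mul_nonneg (by positivity) (hp0 x)
  refine ⟨fun x => δ * x + (1 - δ) * q x, by fun_prop, fun x => ?_, fun x => ?_, fun x => ?_,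
    fun x => ?_, fun x hx => ?_⟩
  · simp only [hqper]; ring
  · rw [(hd x).deriv]
    have := mul_nonneg h1δ (hpp x)
    linarith [hδ.1]
  · rw [(hd x).deriv]
    have h1 : 2 * π / I * p x ≤ B := (le_abs_self _).trans (hB x)
    have h2 : (1 - δ) * (2 * π / I * p x) ≤ 1 * B := by
      refine mul_le_mul (by linarith [hδ.1]) h1 (hpp x) (by norm_num)
    linarith [hδ.2]
  · have e : δ * x + (1 - δ) * q x - x = (1 - δ) * (q x - x) := by ring
    simp only [e]
    rw [abs_mul, abs_of_nonneg h1δ]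
    have h1 : |q x - x| ≤ κ := hκ x
    have h2 : (1 - δ) * |q x - x| ≤ 1 * κ :=
      mul_le_mul (by linarith [hδ.1]) h1 (abs_nonneg _) (by norm_num)
    linarith
  · rw [(hd x).deriv, hx]; ring

/-- The profile of a single tooth: `0` near `π`, `1` near `0`, monotone in between. -/
def tooth (x : ℝ) : ℝ := Real.smoothTransition (Real.cos x + 1 / 2)

lemma contDiff_tooth : ContDiff ℝ ∞ tooth :=
  Real.smoothTransition.contDiff.comp (Real.contDiff_cos.add contDiff_const)

lemma tooth_periodic (x : ℝ) : tooth (x + 2 * π) = tooth x := by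
  simp [tooth]

lemma tooth_mem (x : ℝ) : tooth x ∈ Set.Icc (0:ℝ) 1 :=
  ⟨Real.smoothTransition.nonneg _, Real.smoothTransition.le_one _⟩

lemma integral_tooth {g : ℝ → ℝ} (hg : Continuous g) :
    ∫ x in (0:ℝ)..(2 * π), g (tooth x) * |deriv tooth x| = 2 * ∫ z in (0:ℝ)..1, g z := by
  have hd : ∀ x, HasDerivAt tooth (deriv tooth x) x := fun x =>
    (contDiff_tooth.differentiable (by simp) x).hasDerivAt
  have hc : Continuous tooth := contDiff_tooth.continuous
  have hc' : Continuous (deriv tooth) := contDiff_tooth.continuous_deriv (by simp)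
  have hform : ∀ x, deriv tooth x
      = deriv Real.smoothTransition (Real.cos x + 1 / 2) * (-Real.sin x) := by
    intro x
    have h1 : HasDerivAt Real.smoothTransition _ (Real.cos x + 1 / 2) :=
      (Real.smoothTransition.contDiff.differentiable (n := ∞) (by simp) _).hasDerivAt
    exact (HasDerivAt.comp (h₂ := Real.smoothTransition) x h1
      ((Real.hasDerivAt_cos x).add_const (1 / 2))).deriv
  have hS0 : ∀ x, 0 ≤ deriv Real.smoothTransition x := fun x =>
    Real.smoothTransition.monotone.deriv_nonneg
  have t0 : tooth 0 = 1 := Real.smoothTransition.one_of_one_le (by norm_num)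
  have tπ : tooth π = 0 := Real.smoothTransition.zero_of_nonpos (by norm_num)
  have t2π : tooth (2 * π) = 1 := by rw [← t0, ← tooth_periodic 0, zero_add]
  have hF : Continuous fun x => g (tooth x) * |deriv tooth x| := by fun_prop
  rw [← intervalIntegral.integral_add_adjacent_intervals
    (hF.intervalIntegrable 0 π) (hF.intervalIntegrable π (2 * π))]
  have i1 : ∫ x in (0:ℝ)..π, g (tooth x) * |deriv tooth x| = ∫ z in (0:ℝ)..1, g z := by
    have : ∫ x in (0:ℝ)..π, g (tooth x) * |deriv tooth x|
        = ∫ x in (0:ℝ)..π, -((g ∘ tooth) x * deriv tooth x) := by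
      refine intervalIntegral.integral_congr fun x hx => ?_
      rw [Set.uIcc_of_le Real.pi_pos.le] at hx
      have : deriv tooth x ≤ 0 := by
        rw [hform]
        have := mul_nonneg (hS0 (Real.cos x + 1 / 2)) (Real.sin_nonneg_of_nonneg_of_le_pi hx.1 hx.2)
        linarith
      simp only [abs_of_nonpos this, Function.comp]
      ring
    rw [this, intervalIntegral.integral_neg, intervalIntegral.integral_comp_mul_deriv
      (fun x _ => hd x) hc'.continuousOn hg, t0, tπ, intervalIntegral.integral_symm, neg_neg]
  have i2 : ∫ x in π..(2 * π), g (tooth x) * |deriv tooth x| = ∫ z in (0:ℝ)..1, g z := by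
    have : ∫ x in π..(2 * π), g (tooth x) * |deriv tooth x|
        = ∫ x in π..(2 * π), (g ∘ tooth) x * deriv tooth x := by
      refine intervalIntegral.integral_congr fun x hx => ?_
      rw [Set.uIcc_of_le (by linarith [Real.pi_pos])] at hx
      have : 0 ≤ deriv tooth x := by
        rw [hform]
        have hs : Real.sin x ≤ 0 := by
          have := Real.sin_nonpos_of_nonpos_of_neg_pi_le (x := x - 2 * π)
            (by linarith [hx.2]) (by linarith [hx.1])
          rwa [Real.sin_sub_two_pi] at this
        exact mul_nonneg (hS0 _) (by linarith)
      simp only [abs_of_nonneg this, Function.comp]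
    rw [this, intervalIntegral.integral_comp_mul_deriv
      (fun x _ => hd x) hc'.continuousOn hg, t2π, tπ]
  rw [i1, i2]; ring

/-- The coarea identity for `n` teeth on the circle: each level is taken `2 n` times. -/
lemma integral_teeth {g : ℝ → ℝ} (hg : Continuous g) {n : ℕ} (hn : 0 < n) :
    ∫ x in (0:ℝ)..(2 * π), g (tooth (n * x)) * |n * deriv tooth (n * x)|
      = 2 * n * ∫ z in (0:ℝ)..1, g z := by
  have hn' : (n : ℝ) ≠ 0 := by positivity
  have hc : Continuous tooth := contDiff_tooth.continuous
  have hc' : Continuous (deriv tooth) := contDiff_tooth.continuous_deriv (by simp)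
  set F : ℝ → ℝ := fun x => g (tooth x) * |deriv tooth x| with hF
  have hFc : Continuous F := by fun_prop
  have hFp : Function.Periodic F (2 * π) := fun x => by
    simp only [hF, tooth_periodic, deriv_periodic tooth_periodic]
  have e : ∀ x : ℝ, g (tooth (n * x)) * |n * deriv tooth (n * x)| = n * F (n * x) := by
    intro x
    simp only [hF]
    rw [abs_mul, Nat.abs_cast]
    ring
  simp only [e]
  rw [intervalIntegral.integral_const_mul, intervalIntegral.integral_comp_mul_left F hn',
    smul_eq_mul, mul_inv_cancel_left₀ hn']
  have := hFp.intervalIntegral_add_zsmul_eq n 0 hFc.intervalIntegrable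
  simp only [zero_add, zsmul_eq_mul, Int.cast_natCast] at this
  rw [mul_zero, this, hF, integral_tooth hg]
  ring

/-- The two boundary curves of a ribbon have distance zero. -/
lemma Ribbon.close_boundary {d : ℕ} {c h : ℝ → Rd d} {M : ℝ} (R : Ribbon c h M) {ε : ℝ}
    (hε : 0 < ε) : Close ε c (fun θ => c θ + h θ) := by
  have hM := R.nonneg
  have hS : ContDiff ℝ ∞ Real.smoothTransition := Real.smoothTransition.contDiff
  -- `φ₁` stretches the set where the tooth vanishes, `φ₂` the set where it equals `1`.
  obtain ⟨B₁, κ₁, hB₁, hκ₁, h₁⟩ := exists_compression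
    (p := fun x => Real.smoothTransition (-Real.cos x - 1 / 2))
    (hS.comp (Real.contDiff_cos.neg.sub contDiff_const)) (fun x => by simp)
    (fun x => Real.smoothTransition.nonneg _)
    ⟨π, ⟨Real.pi_pos, by linarith [Real.pi_pos]⟩,
      Real.smoothTransition.pos_of_pos (by simp; norm_num)⟩
  obtain ⟨B₂, κ₂, hB₂, hκ₂, h₂⟩ := exists_compression
    (p := fun x => Real.smoothTransition (Real.cos x - 1 / 2))
    (hS.comp (Real.contDiff_cos.sub contDiff_const)) (fun x => by simp)
    (fun x => Real.smoothTransition.nonneg _)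
    ⟨π / 4, ⟨by positivity, by linarith [Real.pi_pos]⟩,
      Real.smoothTransition.pos_of_pos (by
        rw [Real.cos_pi_div_four]
        have : (1:ℝ) < Real.sqrt 2 := by
          rw [Real.lt_sqrt (by norm_num)]; norm_num
        linarith)⟩
  have z₁ : ∀ x, tooth x ≠ 0 → Real.smoothTransition (-Real.cos x - 1 / 2) = 0 := by
    intro x hx
    refine Real.smoothTransition.zero_of_nonpos ?_
    by_contra hlt
    exact hx (Real.smoothTransition.zero_of_nonpos (by linarith))
  have z₂ : ∀ x, 1 - tooth x ≠ 0 → Real.smoothTransition (Real.cos x - 1 / 2) = 0 := by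
    intro x hx
    refine Real.smoothTransition.zero_of_nonpos ?_
    by_contra hlt
    exact hx (sub_eq_zero.2 (Real.smoothTransition.one_of_one_le (by linarith)).symm)
  obtain ⟨L, hL⟩ := exists_bound_of_periodic (f := deriv tooth)
    (contDiff_tooth.continuous_deriv (by simp)) (deriv_periodic tooth_periodic)
  have hL0 : 0 ≤ L := (norm_nonneg _).trans (hL 0)
  set B := 1 + B₁ + B₂ with hB
  set κ := κ₁ + κ₂ with hκ
  have hB0 : 0 ≤ B := by positivity
  have hκ0 : 0 ≤ κ := by positivity
  set e := ε / 5 with he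
  have he0 : 0 < e := by positivity
  -- The number of teeth makes the tangential displacements cheap.
  obtain ⟨n, hn⟩ := exists_nat_gt ((M * κ) ^ 2 * (M * B + M * L) * (2 * π) / e ^ 2)
  have hn0 : 0 < n := by
    rcases Nat.eq_zero_or_pos n with h0 | h0
    · rw [h0] at hn
      have : 0 ≤ (M * κ) ^ 2 * (M * B + M * L) * (2 * π) / e ^ 2 := by positivity
      simp at hn; linarith
    · exact h0
  have hnr : (1:ℝ) ≤ n := by exact_mod_cast hn0
  have hnpos : (0:ℝ) < n := by linarith
  have cost : (M * (κ / n)) ^ 2 * (M * B + M * (n * L)) * (2 * π) < e ^ 2 := by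
    rw [div_lt_iff₀ (by positivity)] at hn
    have : (M * (κ / n)) ^ 2 * (M * B + M * (n * L)) * (2 * π)
        ≤ (M * κ) ^ 2 * (M * B + M * L) * (2 * π) / n := by
      have e1 : (M * κ) ^ 2 * (M * B + M * L) * (2 * π) / n
          = (M * (κ / n)) ^ 2 * (M * (n * B) + M * (n * L)) * (2 * π) := by
        field_simp
      rw [e1]
      have : B ≤ n * B := by nlinarith
      gcongr
    refine this.trans_lt ?_
    rw [div_lt_iff₀ hnpos]
    linarith
  -- The compression factor then makes the growth of the teeth cheap.
  obtain ⟨δ, hδ, hδE⟩ : ∃ δ ∈ Set.Ioc (0:ℝ) 1,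
      (2 * M) ^ 2 * (M * δ * (2 * π) + M * (2 * n * δ)) < e ^ 2 := by
    have hcont : Continuous fun δ : ℝ =>
        (2 * M) ^ 2 * (M * δ * (2 * π) + M * (2 * n * δ)) := by fun_prop
    have hev : ∀ᶠ δ in 𝓝[>] (0:ℝ),
        (2 * M) ^ 2 * (M * δ * (2 * π) + M * (2 * n * δ)) < e ^ 2 := by
      refine (hcont.continuousAt.eventually_lt_const ?_).filter_mono nhdsWithin_le_nhds
      simpa using pow_pos he0 2
    obtain ⟨δ, h1, h2⟩ := (hev.and (Ioc_mem_nhdsGT (zero_lt_one' ℝ))).exists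
    exact ⟨δ, h2, h1⟩
  obtain ⟨φ₁, s₁, p₁, d₁, b₁, k₁, c₁⟩ := h₁ δ hδ
  obtain ⟨φ₂, s₂, p₂, d₂, b₂, k₂, c₂⟩ := h₂ δ hδ
  -- Rescaling by `n`.
  have resc : ∀ φ : ℝ → ℝ, ContDiff ℝ ∞ φ → (∀ x, φ (x + 2 * π) = φ x + 2 * π) →
      ContDiff ℝ ∞ (fun θ => φ (n * θ) / n) ∧
      (∀ θ, φ (n * (θ + 2 * π)) / n = φ (n * θ) / n + 2 * π) ∧
      (∀ θ, deriv (fun θ => φ (n * θ) / n) θ = deriv φ (n * θ)) := by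
    intro φ hφ hp
    refine ⟨(hφ.comp (contDiff_const.mul contDiff_id)).div_const _, fun θ => ?_, fun θ => ?_⟩
    · have : ∀ m : ℕ, φ (n * θ + m * (2 * π)) = φ (n * θ) + m * (2 * π) := by
        intro m
        induction m with
        | zero => simp
        | succ k ih =>
          rw [show (n:ℝ) * θ + ((k + 1 : ℕ) : ℝ) * (2 * π) = (n * θ + k * (2 * π)) + 2 * π by
            push_cast; ring, hp, ih]
          push_cast; ring
      rw [mul_add, this]
      field_simp
    · have h1 : HasDerivAt φ (deriv φ (n * θ)) (n * θ) :=
        (hφ.differentiable (by simp) _).hasDerivAt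
      have h2 : HasDerivAt (fun θ : ℝ => (n:ℝ) * θ) n θ := by
        simpa using (hasDerivAt_id θ).const_mul (n:ℝ)
      have h3 := (HasDerivAt.comp (h₂ := φ) θ h1 h2).div_const (n:ℝ)
      rw [show deriv (fun θ => φ (n * θ) / n) θ = _ from h3.deriv]
      field_simp
  obtain ⟨S₁, P₁, D₁⟩ := resc φ₁ s₁ p₁
  obtain ⟨S₂, P₂, D₂⟩ := resc φ₂ s₂ p₂
  set Φ₁ : ℝ → ℝ := fun θ => φ₁ (n * θ) / n with hΦ₁
  set Φ₂ : ℝ → ℝ := fun θ => φ₂ (n * θ) / n with hΦ₂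
  have K₁ : ∀ θ, |Φ₁ θ - θ| ≤ κ₁ / n := by
    intro θ
    have : Φ₁ θ - θ = (φ₁ (n * θ) - n * θ) / n := by simp only [hΦ₁]; field_simp
    rw [this, abs_div, Nat.abs_cast]
    gcongr
    exact k₁ _
  have K₂ : ∀ θ, |Φ₂ θ - θ| ≤ κ₂ / n := by
    intro θ
    have : Φ₂ θ - θ = (φ₂ (n * θ) - n * θ) / n := by simp only [hΦ₂]; field_simp
    rw [this, abs_div, Nat.abs_cast]
    gcongr
    exact k₂ _
  set Z : ℝ → ℝ := fun θ => tooth (n * θ) with hZ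
  have hZs : ContDiff ℝ ∞ Z := contDiff_tooth.comp (contDiff_const.mul contDiff_id)
  have hZd : ∀ θ, deriv Z θ = n * deriv tooth (n * θ) := by
    intro θ
    have h1 : HasDerivAt tooth (deriv tooth (n * θ)) (n * θ) :=
      (contDiff_tooth.differentiable (by simp) _).hasDerivAt
    have h2 : HasDerivAt (fun θ : ℝ => (n:ℝ) * θ) n θ := by
      simpa using (hasDerivAt_id θ).const_mul (n:ℝ)
    rw [show deriv Z θ = _ from (HasDerivAt.comp (h₂ := tooth) θ h1 h2).deriv]
    ring
  have hZper : ∀ θ, Z (θ + 2 * π) = Z θ := by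
    intro θ
    simp only [hZ]
    rw [mul_add]
    exact Function.Periodic.nat_mul (f := tooth) tooth_periodic n _
  have hZm : ∀ θ, Z θ ∈ Set.Icc (0:ℝ) 1 := fun θ => tooth_mem _
  have hZL : ∀ θ, |deriv Z θ| ≤ n * L := by
    intro θ
    rw [hZd, abs_mul, Nat.abs_cast]
    gcongr
    exact hL _
  have hV : ∀ g : ℝ → ℝ, Continuous g → (∀ x, 0 ≤ g x) →
      ∫ θ in (0:ℝ)..(2 * π), g (Z θ) * |deriv Z θ| ≤ 2 * n * ∫ z in (0:ℝ)..1, g z := by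
    intro g hg _
    simp only [hZd]
    exact (integral_teeth hg hn0).le
  set W : ℝ → ℝ := fun θ => 1 - Z θ with hW
  have hWd : ∀ θ, deriv W θ = -deriv Z θ := fun θ => by
    simp only [hW]
    rw [deriv_const_sub]
  have hVW : ∀ g : ℝ → ℝ, Continuous g → (∀ x, 0 ≤ g x) →
      ∫ θ in (0:ℝ)..(2 * π), g (W θ) * |deriv W θ| ≤ 2 * n * ∫ z in (0:ℝ)..1, g z := by
    intro g hg hg0
    have h1 := hV (fun z => g (1 - z)) (hg.comp (by fun_prop)) (fun x => hg0 _)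
    rw [intervalIntegral.integral_comp_sub_left g] at h1
    simpa [hWd, hW] using h1
  have hnL : ∀ θ : ℝ, (0:ℝ) ≤ n * L := fun _ => by positivity
  -- `stage3` runs from the far boundary, where the teeth have profile `W = 1 - Z`; it is reversed
  -- in the concatenation.
  have stage0 : Close e c (fun θ => c (Φ₁ θ)) := by
    have := R.slide (Z := fun _ => 0) (Φa := fun θ => θ) (Φb := Φ₁) contDiff_const contDiff_id S₁
      (fun _ => rfl) (fun _ => by simp) (fun _ => rfl) P₁ (fun θ => by simp)
      (fun θ => by rw [D₁]; exact d₁ _) (B := B) (κ := κ / n) (L := n * L)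
      (fun θ => by simp only [deriv_id'']; linarith)
      (fun θ => by rw [D₁]; linarith [b₁ (n * θ)])
      (fun θ => (K₁ θ).trans (by gcongr; linarith)) (fun θ => by simpa using hnL θ) he0 cost
    simpa using this
  have stage1 : Close e (fun θ => c (Φ₁ θ)) (fun θ => c (Φ₁ θ) + Z θ • h (Φ₁ θ)) :=
    R.grow hZs S₁ hZper hZm P₁ (fun θ => by rw [D₁]; exact d₁ _)
      (δ := δ) (η := δ) (V := 2 * n)
      (fun θ hz => by rw [D₁]; exact c₁ _ (z₁ _ hz)) hδ.1.le hδ.1 hδ.2 (by positivity) hV he0 hδE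
  have stage2 : Close e (fun θ => c (Φ₁ θ) + Z θ • h (Φ₁ θ))
      (fun θ => c (Φ₂ θ) + Z θ • h (Φ₂ θ)) :=
    R.slide hZs S₁ S₂ hZper hZm P₁ P₂ (fun θ => by rw [D₁]; exact d₁ _)
      (fun θ => by rw [D₂]; exact d₂ _) (B := B) (κ := κ / n) (L := n * L)
      (fun θ => by rw [D₁]; linarith [b₁ (n * θ)])
      (fun θ => by rw [D₂]; linarith [b₂ (n * θ)])
      (fun θ => by
        have e1 : Φ₂ θ - Φ₁ θ = (Φ₂ θ - θ) - (Φ₁ θ - θ) := by ring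
        rw [e1, hκ, add_div]
        refine (abs_sub _ _).trans ?_
        linarith [K₁ θ, K₂ θ]) hZL he0 cost
  have stage3 : Close e (fun θ => c (Φ₂ θ) + h (Φ₂ θ))
      (fun θ => c (Φ₂ θ) + Z θ • h (Φ₂ θ)) := by
    have := R.reverse.grow (Z := W) (contDiff_const.sub hZs) S₂
      (fun θ => by simp only [hW, hZper])
      (fun θ => ⟨sub_nonneg.2 (hZm θ).2, by simp only [hW]; linarith [(hZm θ).1]⟩)
      P₂ (fun θ => by rw [D₂]; exact d₂ _)
      (δ := δ) (η := δ) (V := 2 * n)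
      (fun θ hz => by rw [D₂]; exact c₂ _ (z₂ _ hz)) hδ.1.le hδ.1 hδ.2 (by positivity) hVW he0 hδE
    convert this using 2 with θ
    simp only [hW]
    module
  have stage4 : Close e (fun θ => c (Φ₂ θ) + h (Φ₂ θ)) (fun θ => c θ + h θ) := by
    have := R.slide (Z := fun _ => 1) (Φa := Φ₂) (Φb := fun θ => θ) contDiff_const S₂ contDiff_id
      (fun _ => rfl) (fun _ => by simp) P₂ (fun _ => rfl)
      (fun θ => by rw [D₂]; exact d₂ _) (fun θ => by simp) (B := B) (κ := κ / n) (L := n * L)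
      (fun θ => by rw [D₂]; linarith [b₂ (n * θ)])
      (fun θ => by simp only [deriv_id'']; linarith)
      (fun θ => by
        rw [abs_sub_comm]
        exact (K₂ θ).trans (by gcongr; linarith)) (fun θ => by simpa using hnL θ) he0 cost
    simpa using this
  have := close_trans (close_trans (close_trans (close_trans stage0 stage1) stage2)
    (close_symm stage3)) stage4
  rwa [show e + e + e + e + e = ε by simp only [he]; ring] at this

/-! ### Transversal fields and the local step -/

/-- Transversality on a compact set persists under small perturbations. -/
lemma eventually_indep {d : ℕ} {u v : ℝ × (ℝ × ℝ) → Rd d} (hu : Continuous u) (hv : Continuous v)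
    {K : Set (ℝ × ℝ)} (hK : IsCompact K) {x₀ : ℝ}
    (h : ∀ y ∈ K, LinearIndependent ℝ ![u (x₀, y), v (x₀, y)]) :
    ∀ᶠ x in 𝓝 x₀, ∀ y ∈ K, LinearIndependent ℝ ![u (x, y), v (x, y)] := by
  have hc : Continuous fun p : ℝ × (ℝ × ℝ) => ![u p, v p] := by
    refine continuous_pi fun i => ?_
    fin_cases i
    · exact hu
    · exact hv
  refine hK.eventually_forall_of_forall_eventually
    (P := fun x y => LinearIndependent ℝ ![u (x, y), v (x, y)]) fun y hy => ?_
  exact hc.continuousAt.eventually (LinearIndependent.eventually (h y hy))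

lemma exists_ribbon {d : ℕ} {c h : ℝ → Rd d} (hc : ContDiff ℝ ∞ c) (hh : ContDiff ℝ ∞ h)
    (pc : ∀ θ, c (θ + 2 * π) = c θ) (ph : ∀ θ, h (θ + 2 * π) = h θ)
    (hi : ∀ T ∈ Set.Icc (0:ℝ) 1, ∀ θ ∈ Set.Icc 0 (2 * π),
      LinearIndependent ℝ ![h θ, deriv c θ + T • deriv h θ]) : ∃ M, Ribbon c h M := by
  obtain ⟨M₁, h₁⟩ := exists_bound_of_periodic hh.continuous ph
  obtain ⟨M₂, h₂⟩ := exists_bound_of_periodic (hc.continuous_deriv (by simp)) (deriv_periodic pc)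
  obtain ⟨M₃, h₃⟩ := exists_bound_of_periodic (hh.continuous_deriv (by simp)) (deriv_periodic ph)
  have n₁ := (norm_nonneg _).trans (h₁ 0)
  have n₂ := (norm_nonneg _).trans (h₂ 0)
  have n₃ := (norm_nonneg _).trans (h₃ 0)
  refine ⟨M₁ + M₂ + M₃, hc, hh, pc, ph, fun T hT θ => ?_, fun θ => by linarith [h₁ θ],
    fun T hT θ => ?_⟩
  · have per : Function.Periodic (fun θ => ![h θ, deriv c θ + T • deriv h θ]) (2 * π) :=
      fun θ => by simp only [ph, deriv_periodic pc, deriv_periodic ph]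
    obtain ⟨y, hy, hxy⟩ := per.exists_mem_Ico₀ (by positivity) θ
    have hxy' : ![h θ, deriv c θ + T • deriv h θ] = ![h y, deriv c y + T • deriv h y] := hxy
    rw [hxy']
    exact hi T hT y ⟨hy.1, hy.2.le⟩
  · refine (norm_add_le _ _).trans ?_
    rw [norm_smul, Real.norm_eq_abs, abs_of_nonneg hT.1]
    have := mul_le_mul hT.2 (h₃ θ) (norm_nonneg _) zero_le_one
    linarith [h₂ θ]

/-- In dimension one there is no regular closed curve; in dimension two the tangent is rotated by
a right angle; in higher dimension a generic constant vector works, the cone over the tangents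
having dimension at most two. -/
lemma exists_transversal {d : ℕ} (hd : 1 ≤ d) {c : ℝ → Rd d} (hc : ContDiff ℝ ∞ c)
    (pc : ∀ θ, c (θ + 2 * π) = c θ) (rc : ∀ θ, deriv c θ ≠ 0) :
    ∃ N : ℝ → Rd d, ContDiff ℝ ∞ N ∧ (∀ θ, N (θ + 2 * π) = N θ) ∧
      ∀ θ, LinearIndependent ℝ ![N θ, deriv c θ] := by
  have hc' : ContDiff ℝ ∞ (deriv c) := (contDiff_infty_iff_deriv.1 hc).2
  rcases (by omega : d = 1 ∨ d = 2 ∨ 3 ≤ d) with rfl | rfl | h3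
  · exfalso
    have hcd : ∀ θ, HasDerivAt (fun θ => c θ 0) (deriv c θ 0) θ := fun θ =>
      (EuclideanSpace.proj (0 : Fin 1) : Rd 1 →L[ℝ] ℝ).hasFDerivAt.comp_hasDerivAt θ
        (hc.differentiable (by simp) θ).hasDerivAt
    obtain ⟨x, _, hx⟩ := exists_hasDerivAt_eq_zero (f := fun θ => c θ 0)
      (f' := fun θ => deriv c θ 0) (a := 0) (b := 2 * π) (by positivity)
      (continuous_iff_continuousAt.2 fun θ => (hcd θ).continuousAt).continuousOn
      (by have := pc 0; rw [zero_add] at this; simp only [this]) (fun θ _ => hcd θ)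
    refine rc x ?_
    ext i
    rw [Subsingleton.elim i 0]
    simpa using hx
  · refine ⟨fun θ => !₂[-(deriv c θ 1), deriv c θ 0], ?_, fun θ => ?_, fun θ => ?_⟩
    · rw [contDiff_euclidean] at hc' ⊢
      intro i
      fin_cases i
      · simpa using (hc' 1).neg
      · simpa using hc' 0
    · simp only [deriv_periodic pc]
    · rw [LinearIndependent.pair_iff]
      intro a b hab
      set v := deriv c θ with hv
      have e0 : -(a * v 1) + b * v 0 = 0 := by
        have := congrArg (fun w : Rd 2 => w 0) hab
        simpa using this
      have e1 : a * v 0 + b * v 1 = 0 := by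
        have := congrArg (fun w : Rd 2 => w 1) hab
        simpa using this
      have hne : v 0 ^ 2 + v 1 ^ 2 ≠ 0 := by
        intro h0
        refine rc θ ?_
        rw [← hv]
        have h0' : v 0 = 0 := by nlinarith [sq_nonneg (v 0), sq_nonneg (v 1)]
        have h1' : v 1 = 0 := by nlinarith [sq_nonneg (v 0), sq_nonneg (v 1)]
        ext i
        fin_cases i
        · simpa using h0'
        · simpa using h1'
      constructor
      · refine (mul_eq_zero.1 ?_).resolve_right hne
        linear_combination v 0 * e1 - v 1 * e0
      · refine (mul_eq_zero.1 ?_).resolve_right hne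
        linear_combination v 0 * e0 + v 1 * e1
  · have hsm : ContDiff ℝ 1 fun p : ℝ × ℝ => p.1 • deriv c p.2 :=
      contDiff_fst.smul ((hc'.of_le (by exact_mod_cast le_top)).comp contDiff_snd)
    have hdense := hsm.dense_compl_range_of_finrank_lt_finrank (by simp; omega)
    obtain ⟨v, hv⟩ := hdense.nonempty
    refine ⟨fun _ => v, contDiff_const, fun _ => rfl, fun θ => ?_⟩
    rw [LinearIndependent.pair_iff]
    intro a b hab
    have ha : a = 0 := by
      by_contra ha
      refine hv ⟨(-(a⁻¹ * b), θ), ?_⟩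
      have : a • v = -(b • deriv c θ) := eq_neg_of_add_eq_zero_left hab
      calc (-(a⁻¹ * b)) • deriv c θ = a⁻¹ • (-(b • deriv c θ)) := by module
        _ = v := by rw [← this, inv_smul_smul₀ ha]
    refine ⟨ha, ?_⟩
    rw [ha, zero_smul, zero_add] at hab
    exact (smul_eq_zero.1 hab).resolve_right (rc θ)

/-- Nearby curves `H t`, `H s` have distance zero: `H t` is first pushed off itself by a small
transversal field `K N`, and `H s` is close enough to `H t` for the remaining displacement
`H s - H t - K N` to be transversal as well. -/
lemma eventually_close {d : ℕ} (hd : 1 ≤ d) {H : ℝ → ℝ → Rd d}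
    (hH : ContDiff ℝ ∞ (Function.uncurry H))
    (hHper : ∀ t ∈ Set.Icc (0:ℝ) 1, ∀ θ, H t (θ + 2 * π) = H t θ)
    (hHreg : ∀ t ∈ Set.Icc (0:ℝ) 1, ∀ θ, deriv (H t) θ ≠ 0) {t : ℝ} (ht : t ∈ Set.Icc (0:ℝ) 1) :
    ∀ᶠ s in 𝓝[Set.Icc 0 1] t, ∀ ε > (0:ℝ), Close ε (H t) (H s) := by
  have hHs : ∀ s, ContDiff ℝ ∞ (H s) := fun s =>
    hH.comp (f := fun θ : ℝ => (s, θ)) (by fun_prop)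
  have hHd : Continuous fun p : ℝ × ℝ => deriv (H p.1) p.2 := by
    have : (fun p : ℝ × ℝ => deriv (H p.1) p.2)
        = fun p => fderiv ℝ (Function.uncurry H) p (0, 1) := by
      funext p
      exact (hasDerivAt_snd hH p.1 p.2).deriv
    rw [this]
    have := hH.continuous_fderiv (by simp)
    fun_prop
  have hHc : Continuous fun p : ℝ × ℝ => H p.1 p.2 := hH.continuous
  obtain ⟨N, sN, pN, iN⟩ := exists_transversal hd (hHs t) (hHper t ht) (hHreg t ht)
  have cN := sN.continuous
  have cN' : Continuous (deriv N) := sN.continuous_deriv (by simp)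
  have cc' : Continuous (deriv (H t)) := (hHs t).continuous_deriv (by simp)
  have dd : ∀ {f : ℝ → Rd d}, ContDiff ℝ ∞ f → ∀ θ, HasDerivAt f (deriv f θ) θ := fun hf θ =>
    (hf.differentiable (by simp) θ).hasDerivAt
  have hQ : IsCompact (Set.Icc (0:ℝ) 1 ×ˢ Set.Icc (0:ℝ) (2 * π)) :=
    isCompact_Icc.prod isCompact_Icc
  have ev1 := eventually_indep (x₀ := 0) (u := fun p => N p.2.2)
    (v := fun p => deriv (H t) p.2.2 + (p.2.1 * p.1) • deriv N p.2.2) (by fun_prop) (by fun_prop)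
    hQ (fun y _ => by simpa using iN y.2)
  obtain ⟨K, hK, hK0⟩ :=
    ((ev1.filter_mono nhdsWithin_le_nhds).and (self_mem_nhdsWithin (s := Set.Ioi (0:ℝ)))).exists
  have hK0' : K ≠ 0 := (Set.mem_Ioi.1 hK0).ne'
  have scale : ∀ (a : ℝ) (u v : Rd d), a ≠ 0 → LinearIndependent ℝ ![u, v] →
      LinearIndependent ℝ ![a • u, v] := by
    intro a u v ha h
    rw [LinearIndependent.pair_iff] at h ⊢
    intro x y hxy
    obtain ⟨h1, h2⟩ := h (x * a) y (by rw [← hxy, mul_smul])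
    exact ⟨(mul_eq_zero.1 h1).resolve_right ha, h2⟩
  have sKN : ContDiff ℝ ∞ fun θ => K • N θ := sN.const_smul K
  have dKN : ∀ θ, deriv (fun θ => K • N θ) θ = K • deriv N θ := fun θ =>
    ((dd sN θ).const_smul K).deriv
  obtain ⟨M₁, R₁⟩ := exists_ribbon (c := H t) (h := fun θ => K • N θ) (hHs t) sKN
    (hHper t ht) (fun θ => by simp only [pN]) (fun T hT θ hθ => by
      rw [dKN, smul_smul]
      exact scale K _ _ hK0' (hK (T, θ) ⟨hT, hθ⟩))
  have ev2 := eventually_indep (x₀ := t)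
    (u := fun p => H p.1 p.2.2 - (H t p.2.2 + K • N p.2.2))
    (v := fun p => (deriv (H t) p.2.2 + K • deriv N p.2.2) +
      p.2.1 • (deriv (H p.1) p.2.2 - (deriv (H t) p.2.2 + K • deriv N p.2.2)))
    (by
      have h1 : Continuous fun p : ℝ × (ℝ × ℝ) => H p.1 p.2.2 :=
        hHc.comp (f := fun p : ℝ × (ℝ × ℝ) => (p.1, p.2.2)) (by fun_prop)
      have h2 := (hHs t).continuous
      fun_prop)
    (by
      have h1 : Continuous fun p : ℝ × (ℝ × ℝ) => deriv (H p.1) p.2.2 :=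
        hHd.comp (f := fun p : ℝ × (ℝ × ℝ) => (p.1, p.2.2)) (by fun_prop)
      fun_prop)
    hQ (fun y hy => by
      have h1 := hK (1 - y.1, y.2)
        ⟨⟨by linarith [hy.1.2], by linarith [hy.1.1]⟩, hy.2⟩
      have h2 := scale (-K) _ _ (neg_ne_zero.2 hK0') h1
      convert h2 using 2
      · module
      · congr 1
        module)
  filter_upwards [ev2.filter_mono nhdsWithin_le_nhds, self_mem_nhdsWithin] with s hs hsm
  have dc2 : ∀ θ, deriv (fun θ => H t θ + K • N θ) θ = deriv (H t) θ + K • deriv N θ := fun θ =>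
    ((dd (hHs t) θ).add ((dd sN θ).const_smul K)).deriv
  have dh2 : ∀ θ, deriv (fun θ => H s θ - (H t θ + K • N θ)) θ
      = deriv (H s) θ - (deriv (H t) θ + K • deriv N θ) := fun θ =>
    ((dd (hHs s) θ).sub ((dd (hHs t) θ).add ((dd sN θ).const_smul K))).deriv
  obtain ⟨M₂, R₂⟩ := exists_ribbon (c := fun θ => H t θ + K • N θ)
    (h := fun θ => H s θ - (H t θ + K • N θ)) ((hHs t).add sKN)
    ((hHs s).sub ((hHs t).add sKN)) (fun θ => by simp only [pN, hHper t ht])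
    (fun θ => by simp only [pN, hHper t ht, hHper s hsm])
    (fun T hT θ hθ => by
      rw [dc2, dh2]
      exact hs (T, θ) ⟨hT, hθ⟩)
  intro ε hε
  have := close_trans (R₁.close_boundary (half_pos hε)) (R₂.close_boundary (half_pos hε))
  simpa using this

/-- Vanishing of the geodesic distance of the `L²`-metric: if two smooth regular closed curves
can be joined by a smooth path of regular closed curves, then for every `ε > 0` they can be
joined by such a path of `L²`-length less than `ε`. -/
theorem L2_geodesic_distance_vanishes
    (d : ℕ) (hd : 1 ≤ d) (c₀ c₁ : ℝ → Rd d)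
    (hc₀ : ContDiff ℝ ∞ c₀) (hc₀per : ∀ θ, c₀ (θ + 2 * π) = c₀ θ)
    (hc₀reg : ∀ θ, deriv c₀ θ ≠ 0)
    (hc₁ : ContDiff ℝ ∞ c₁) (hc₁per : ∀ θ, c₁ (θ + 2 * π) = c₁ θ)
    (hc₁reg : ∀ θ, deriv c₁ θ ≠ 0)
    (H : ℝ → ℝ → Rd d) (hH : ContDiff ℝ ∞ (Function.uncurry H))
    (hHper : ∀ t ∈ Set.Icc (0:ℝ) 1, ∀ θ, H t (θ + 2 * π) = H t θ)
    (hHreg : ∀ t ∈ Set.Icc (0:ℝ) 1, ∀ θ, deriv (H t) θ ≠ 0)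
    (hH0 : H 0 = c₀) (hH1 : H 1 = c₁) :
    ∀ ε > (0:ℝ), ∃ γ : ℝ → ℝ → Rd d,
      ContDiff ℝ ∞ (Function.uncurry γ) ∧
      (∀ t ∈ Set.Icc (0:ℝ) 1, ∀ θ, γ t (θ + 2 * π) = γ t θ) ∧
      (∀ t ∈ Set.Icc (0:ℝ) 1, ∀ θ, deriv (γ t) θ ≠ 0) ∧
      γ 0 = c₀ ∧ γ 1 = c₁ ∧
      L2PathLength γ < ε := by
  intro ε hε
  have := isPreconnected_Icc.induction₂ (s := Set.Icc (0:ℝ) 1)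
    (fun s t => ∀ ε > (0:ℝ), Close ε (H s) (H t))
    (fun t ht => eventually_close hd hH hHper hHreg ht)
    (fun x y z _ _ _ hxy hyz ε hε => by
      simpa using close_trans (hxy _ (half_pos hε)) (hyz _ (half_pos hε)))
    (fun x y _ _ hxy ε hε => close_symm (hxy ε hε))
    (Set.left_mem_Icc.2 zero_le_one) (Set.right_mem_Icc.2 zero_le_one) ε hε
  rw [hH0, hH1] at this
  exact this
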